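/- arXiv:1312.7833 — 2 statements merged into one kernel-verified Lean document; each statement's English description precedes it below -/
import Mathlib

section
/- Easy model structure on a conical diagram category: Let M be a model category whose underlying category is locally presentable and which is cofibrantly generated, i.e. there are sets of morphisms I and J' of M such that the fibrations of M are exactly the morphisms having the right lifting property with respect to every member of J', and the trivial fibrations of M are exactly the morphisms having the right lifting property with respect to every member of I. Let J be a small category with an initial object e such that the only morphism of J with target e is the identity of e. Then the functor category J ⥤ M carries a model structure in which: a natural transformation σ : F ⟶ G is a weak equivalence if and only if its component σ_e at e is a weak equivalence in M; σ is a fibration if and only if σ_e is a fibration in M; and consequently σ is simultaneously a fibration and a weak equivalence if and only if σ_e is a trivial fibration in M. -/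
/-!
Easy model structure on a conical diagram category: if `M` is a locally
presentable, cofibrantly generated model category and `J` is a small category
with an initial object `e` whose only incoming morphism is its identity, then
the functor category `J ⥤ M` carries a model structure whose weak equivalences
(resp. fibrations) are the natural transformations whose component at `e` is a
weak equivalence (resp. a fibration) in `M`; consequently the trivial
fibrations are the maps whose component at `e` is a trivial fibration in `M`.
-/

universe u₂ v₂
open CategoryTheory Limits

universe v u

namespace CoSegal

variable {C : Type u} [Category.{v} C]

/-- `f` is a retract of `g`, i.e. `f` is a retract of `g` as objects of the
arrow category of `C`. -/
def IsRetractOf {X Y Z W : C} (f : X ⟶ Y) (g : Z ⟶ W) : Prop :=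
  ∃ (i : Arrow.mk f ⟶ Arrow.mk g) (r : Arrow.mk g ⟶ Arrow.mk f),
    i ≫ r = 𝟙 (Arrow.mk f)

/-- a class of morphisms is stable under retracts if any retract of a morphism
of the class belongs to the class. -/
def StableUnderRetracts (P : MorphismProperty C) : Prop :=
  ∀ ⦃X Y Z W : C⦄ (f : X ⟶ Y) (g : Z ⟶ W), IsRetractOf f g → P g → P f

/-- A (closed) model structure on a category `C`, with class of weak
equivalences `W`, class of cofibrations `Cof` and class of fibrations `Fib`:
`W` satisfies two-out-of-three, the three classes are stable under retracts,
cofibrations have the left lifting property against trivial fibrations,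
trivial cofibrations have the left lifting property against fibrations, and
every morphism factors as a (trivial) cofibration followed by a (trivial)
fibration.  (A model category is a complete and cocomplete category equipped
with such a model structure.) -/
structure IsModelStructure (W Cof Fib : MorphismProperty C) : Prop where
  two_out_of_three : W.HasTwoOutOfThreeProperty
  weq_retract : StableUnderRetracts W
  cof_retract : StableUnderRetracts Cof
  fib_retract : StableUnderRetracts Fib
  lift_cof_trivFib : ∀ ⦃A B X Y : C⦄ (i : A ⟶ B) (p : X ⟶ Y),
    Cof i → Fib p → W p → HasLiftingProperty i p
  lift_trivCof_fib : ∀ ⦃A B X Y : C⦄ (i : A ⟶ B) (p : X ⟶ Y),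
    Cof i → W i → Fib p → HasLiftingProperty i p
  fac_cof_trivFib : MorphismProperty.HasFactorization Cof (Fib ⊓ W)
  fac_trivCof_fib : MorphismProperty.HasFactorization (Cof ⊓ W) Fib

end CoSegal
namespace CoSegal

open CategoryTheory Limits Opposite

/-- A category `J` is `κ`-filtered (for a cardinal `κ`) if every functor to `J`
from a small category with fewer than `κ` morphisms admits a cocone. -/
def IsCardinalFiltered (J : Type u₂) [Category.{v₂} J] (κ : Cardinal.{v}) : Prop :=
  ∀ A : Cat.{v, v}, Cardinal.mk (Arrow A) < κ → ∀ F : A ⥤ J, Nonempty (Cocone F)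

/-- An object `X` of a category `C` is `κ`-presentable if the functor
`Hom(X, -) : C ⥤ Type` preserves colimits indexed by `κ`-filtered small
categories. -/
def IsCardinalPresentable {C : Type u} [Category.{v} C] (X : C)
    (κ : Cardinal.{v}) : Prop :=
  ∀ J : Cat.{v, v}, IsCardinalFiltered J κ →
    PreservesColimitsOfShape J (coyoneda.obj (op X))

/-- A category `C` is locally presentable if it is cocomplete and accessible:
there is a regular cardinal `κ` and a small family of `κ`-presentable objects
such that every object of `C` is the colimit of a `κ`-filtered diagram whose
values are (isomorphic to) objects of the family. -/
def IsLocallyPresentable (C : Type u) [Category.{v} C] : Prop :=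
  HasColimits C ∧
    ∃ κ : Cardinal.{v}, κ.IsRegular ∧
      ∃ (ι : Type v) (G : ι → C),
        (∀ i, IsCardinalPresentable (G i) κ) ∧
        ∀ X : C, ∃ (J : Cat.{v, v}) (_ : IsCardinalFiltered J κ) (F : J ⥤ C)
          (c : Cocone F),
            (∀ j : J, ∃ i, Nonempty (F.obj j ≅ G i)) ∧
            Nonempty (IsColimit c) ∧ Nonempty (c.pt ≅ X)

end CoSegal

namespace CoSegal

open CategoryTheory Limits

/-- the class of morphisms having the right lifting property with respect to
every member of a family of morphisms. -/
def rlpAgainstFamily {C : Type u} [Category.{v} C] {ι : Type u₂}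
    (S : ι → Arrow C) : MorphismProperty C :=
  fun _ _ p => ∀ i, HasLiftingProperty (S i).hom p

end CoSegal

open CategoryTheory Limits

namespace CoSegalAux

open CategoryTheory Limits CoSegal

variable {M : Type u} [Category.{v} M] {J : Type v} [SmallCategory J] {e : J}

/-- counit -/
def eps (he : IsInitial e) (F : J ⥤ M) : (Functor.const J).obj (F.obj e) ⟶ F where
  app j := F.map (he.to j)
  naturality j k f := by
    simp only [Functor.const_obj_obj, Functor.const_obj_map, Category.id_comp]
    rw [← F.map_comp]
    congr 1
    exact he.hom_ext _ _

lemma eps_e (he : IsInitial e) (F : J ⥤ M) : (eps he F).app e = 𝟙 (F.obj e) := by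
  have hid : he.to e = 𝟙 e := he.hom_ext _ _
  simp only [eps, hid, F.map_id]

/-- adjunction -/
def adj (he : IsInitial e) :
    (Functor.const J : M ⥤ J ⥤ M) ⊣ (evaluation J M).obj e :=
  Adjunction.mkOfUnitCounit
    { unit := { app := fun X => 𝟙 X }
      counit :=
        { app := fun F => eps he F
          naturality := fun F G f => by
            ext j
            simp [eps] }
      left_triangle := by
        ext X j
        simp [eps]
      right_triangle := by
        ext F
        have : he.to e = 𝟙 e := he.hom_ext _ _
        simp [eps, this] }

lemma of_iso {P : MorphismProperty M} (hP : StableUnderRetracts P) {X Y Z T : M}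
    {f : X ⟶ Y} {g : Z ⟶ T} (i : Arrow.mk f ≅ Arrow.mk g) (hg : P g) : P f :=
  hP f g ⟨i.hom, i.inv, i.hom_inv_id⟩ hg

lemma fac [HasColimits M] (he : IsInitial e) {F G : J ⥤ M} (σ : F ⟶ G) {E : M}
    (i : F.obj e ⟶ E) (p : E ⟶ G.obj e) (h : i ≫ p = σ.app e) :
    ∃ (H : J ⥤ M) (a : F ⟶ H) (b : H ⟶ G), a ≫ b = σ ∧
      Nonempty (Arrow.mk (a.app e) ≅ Arrow.mk i) ∧
      Nonempty (Arrow.mk (b.app e) ≅ Arrow.mk p) ∧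
      ∀ {X Y : J ⥤ M} (q : X ⟶ Y), HasLiftingProperty i (q.app e) →
        HasLiftingProperty a q := by
  let c : (Functor.const J).obj (F.obj e) ⟶ (Functor.const J).obj E := (Functor.const J).map i
  have w : eps he F ≫ σ = c ≫ (Functor.const J).map p ≫ eps he G := by
    ext j
    simp only [NatTrans.comp_app, eps, c, Functor.const_map_app]
    rw [← Category.assoc, h, σ.naturality]
  have sq : IsPushout (eps he F) c (pushout.inl _ _) (pushout.inr _ _) :=
    IsPushout.of_hasPushout (eps he F) c
  have sqe := sq.map ((evaluation J M).obj e)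
  have hiso : IsIso ((eps he F).app e) := by
    rw [eps_e]
    exact IsIso.id (F.obj e)
  have : IsIso ((pushout.inr (eps he F) c).app e) := by
    have : IsIso (((evaluation J M).obj e).map (eps he F)) := hiso
    exact sqe.isIso_inr_of_isIso
  have h1 := congr_app (pushout.condition (f := eps he F) (g := c)) e
  have h2 := congr_app (pushout.inr_desc σ ((Functor.const J).map p ≫ eps he G) w) e
  have hc : c.app e = i := rfl
  rw [NatTrans.comp_app, NatTrans.comp_app, eps_e, hc] at h1
  rw [NatTrans.comp_app, NatTrans.comp_app, eps_e] at h2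
  refine ⟨pushout (eps he F) c, pushout.inl _ _, pushout.desc σ _ w, pushout.inl_desc _ _ _,
    ⟨Iso.symm ?_⟩, ⟨Iso.symm ?_⟩, ?_⟩
  · refine Arrow.isoMk' _ _ (Iso.refl _) (asIso ((pushout.inr (eps he F) c).app e)) ?_
    simpa using h1
  · refine Arrow.isoMk' _ _ (asIso ((pushout.inr (eps he F) c).app e)) (Iso.refl _) ?_
    simpa using h2
  · intro X Y q hq
    have : HasLiftingProperty c q := ((adj he).hasLiftingProperty_iff i q).2 hq
    exact sq.hasLiftingProperty q

lemma retract_app (e : J) {P : MorphismProperty M} (hP : StableUnderRetracts P) :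
    StableUnderRetracts (C := J ⥤ M) (fun (F G : J ⥤ M) (σ : F ⟶ G) => P (σ.app e)) := by
  rintro X Y Z T f g ⟨i, r, h⟩ hg
  refine hP _ _ ⟨((evaluation J M).obj e).mapArrow.map i, ((evaluation J M).obj e).mapArrow.map r,
    ?_⟩ hg
  exact ((((evaluation J M).obj e).mapArrow.map_comp i r).symm.trans
    (congrArg _ h)).trans (CategoryTheory.Functor.map_id _ _)

end CoSegalAux

open CategoryTheory Limits

theorem easy_model_structure_on_diagrams
    {M : Type u} [Category.{v} M] [HasLimits M]
    (hpres : CoSegal.IsLocallyPresentable M)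
    (W Cof Fib : MorphismProperty M)
    (hmodel : CoSegal.IsModelStructure W Cof Fib)
    {ιI ιJ : Type v} (I : ιI → Arrow M) (J' : ιJ → Arrow M)
    (hFib : Fib = CoSegal.rlpAgainstFamily J')
    (hTrivFib : Fib ⊓ W = CoSegal.rlpAgainstFamily I)
    {J : Type v} [SmallCategory J] (e : J) (he : IsInitial e)
    (honly : ∀ (j : J) (g : j ⟶ e), ∃ h : j = e, g = eqToHom h) :
    ∃ Cof' : MorphismProperty (J ⥤ M),
      CoSegal.IsModelStructure
        (fun (F G : J ⥤ M) (σ : F ⟶ G) => W (σ.app e)) Cof'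
        (fun (F G : J ⥤ M) (σ : F ⟶ G) => Fib (σ.app e)) ∧
      ∀ {F G : J ⥤ M} (σ : F ⟶ G),
        (Fib (σ.app e) ∧ W (σ.app e)) ↔ (Fib ⊓ W) (σ.app e) := by
  have : HasColimits M := hpres.1
  have := hmodel.two_out_of_three
  let TF : MorphismProperty (J ⥤ M) := fun (F G : J ⥤ M) (σ : F ⟶ G) => Fib (σ.app e) ∧ W (σ.app e)
  refine ⟨TF.llp, ?_, fun σ => Iff.rfl⟩
  have fac2 : ∀ {F G : J ⥤ M} (σ : F ⟶ G), ∃ (H : J ⥤ M) (a : F ⟶ H) (b : H ⟶ G), a ≫ b = σ ∧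
      W (a.app e) ∧ Fib (b.app e) ∧ ∀ {X Y : J ⥤ M} (q : X ⟶ Y), Fib (q.app e) →
        HasLiftingProperty a q := by
    intro F G σ
    obtain ⟨d⟩ := hmodel.fac_trivCof_fib.nonempty_mapFactorizationData (σ.app e)
    obtain ⟨H, a, b, hab, ⟨ia⟩, ⟨ib⟩, hl⟩ := CoSegalAux.fac he σ d.i d.p d.fac
    exact ⟨H, a, b, hab, CoSegalAux.of_iso hmodel.weq_retract ia d.hi.2,
      CoSegalAux.of_iso hmodel.fib_retract ib d.hp,
      fun q hq => hl q (hmodel.lift_trivCof_fib _ _ d.hi.1 d.hi.2 hq)⟩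
  refine
    { two_out_of_three :=
        { comp_mem := fun f g hf hg => W.comp_mem (f.app e) (g.app e) hf hg
          of_postcomp := fun f g hg hfg => W.of_postcomp (f.app e) (g.app e) hg hfg
          of_precomp := fun f g hf hfg => W.of_precomp (f.app e) (g.app e) hf hfg }
      weq_retract := CoSegalAux.retract_app e hmodel.weq_retract
      fib_retract := CoSegalAux.retract_app e hmodel.fib_retract
      cof_retract := ?_
      lift_cof_trivFib := fun A B X Y i p hi h1 h2 => hi p ⟨h1, h2⟩
      lift_trivCof_fib := ?_
      fac_cof_trivFib := ⟨fun {F G} σ => ?_⟩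
      fac_trivCof_fib := ⟨fun {F G} σ => ?_⟩ }
  · rintro X Y Z T f g ⟨i, r, h⟩ hg
    exact TF.llp.of_retract (f := f) (g := g) ⟨i, r, h⟩ hg
  · intro A B X Y i p hi hw hp
    obtain ⟨H, a, b, hab, ha, hb, hl⟩ := fac2 i
    have hbw : W (b.app e) := by
      refine W.of_precomp (a.app e) (b.app e) ha ?_
      rw [← NatTrans.comp_app, hab]
      exact hw
    have := hi b ⟨hb, hbw⟩
    have := hl p hp
    have sq : CommSq a i b (𝟙 B) := ⟨by simp [hab]⟩
    refine ⟨fun {s t} sq' => ?_⟩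
    have sq2 : CommSq s a p (b ≫ t) := ⟨by rw [← Category.assoc, hab, sq'.w]⟩
    refine ⟨⟨⟨sq.lift ≫ sq2.lift, ?_, ?_⟩⟩⟩
    · rw [← Category.assoc, sq.fac_left, sq2.fac_left]
    · rw [Category.assoc, sq2.fac_right, ← Category.assoc, sq.fac_right, Category.id_comp]
  · obtain ⟨d⟩ := hmodel.fac_cof_trivFib.nonempty_mapFactorizationData (σ.app e)
    obtain ⟨H, a, b, hab, ⟨ia⟩, ⟨ib⟩, hl⟩ := CoSegalAux.fac he σ d.i d.p d.fac
    exact ⟨⟨H, a, b, hab, fun _ _ q hq => hl q (hmodel.lift_cof_trivFib _ _ d.hi hq.1 hq.2),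
      ⟨CoSegalAux.of_iso hmodel.fib_retract ib d.hp.1,
        CoSegalAux.of_iso hmodel.weq_retract ib d.hp.2⟩⟩⟩
  · obtain ⟨H, a, b, hab, ha, hb, hl⟩ := fac2 σ
    exact ⟨⟨H, a, b, hab, ⟨fun _ _ q hq => hl q hq.1, ha⟩, hb⟩⟩
end

section
/- Easy model structure on the arrow category: Let M be a model category whose underlying category is locally presentable and which is cofibrantly generated, i.e. there are sets of morphisms I and J' of M such that the fibrations of M are exactly the morphisms having the right lifting property with respect to every member of J', and the trivial fibrations of M are exactly the morphisms having the right lifting property with respect to every member of I. Then the arrow category of M (the functor category [1] ⥤ M, where [1] = {0 → 1} is the walking-morphism category) carries a model structure in which a morphism σ : F ⟶ G is a weak equivalence if and only if its component σ_0 : F(0) → G(0) at the source object 0 is a weak equivalence in M, and σ is a fibration if and only if σ_0 is a fibration in M. -/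
/-!
Easy model structure on the arrow category: if `M` is a locally presentable,
cofibrantly generated model category, then the arrow category of `M` (the
category of functors `[1] ⥤ M`, i.e. of morphisms of `M` and commutative
squares) carries a model structure in which a morphism `σ` is a weak
equivalence (resp. a fibration) if and only if its component `σ.left` between
the sources is a weak equivalence (resp. a fibration) in `M`.
-/

universe u₂ v₂
open CategoryTheory Limits

universe v u

open CategoryTheory Limits

lemma arrowEasy_retract_left {M : Type u} [Category.{v} M]
    {X Y Z T : Arrow M} (f : X ⟶ Y) (g : Z ⟶ T)
    (h : CoSegal.IsRetractOf f g) : CoSegal.IsRetractOf f.left g.left := by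
  obtain ⟨i, r, hir⟩ := h
  exact ⟨(Arrow.leftFunc.mapArrow).map i, (Arrow.leftFunc.mapArrow).map r, 
    ((Arrow.leftFunc.mapArrow).map_comp i r).symm.trans
      ((congrArg (Arrow.leftFunc.mapArrow).map hir).trans (CategoryTheory.Functor.map_id _ _))⟩

lemma arrowEasy_retract_pushout {M : Type u} [Category.{v} M]
    {X Y Z T : Arrow M} (f : X ⟶ Y) (g : Z ⟶ T)
    (h : CoSegal.IsRetractOf f g)
    (hg : IsPushout Z.hom g.left g.right T.hom) :
    IsPushout X.hom f.left f.right Y.hom := by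
  obtain ⟨i, r, hir⟩ := h
  have ei : i.left ≫ g = f ≫ i.right := i.w
  have er : r.left ≫ f = g ≫ r.right := r.w
  have e1 : i.left ≫ r.left = 𝟙 X := congrArg CommaMorphism.left hir
  have e2 : i.right ≫ r.right = 𝟙 Y := congrArg CommaMorphism.right hir
  generalize i.left = il at *
  generalize i.right = ir at *
  generalize r.left = rl at *
  generalize r.right = rr at *
  dsimp at il ir rl rr
  have eil := congrArg CommaMorphism.left ei
  have eir := congrArg CommaMorphism.right ei
  have erl := congrArg CommaMorphism.left er
  have err := congrArg CommaMorphism.right er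
  have e1l := congrArg CommaMorphism.left e1
  have e1r := congrArg CommaMorphism.right e1
  have e2l := congrArg CommaMorphism.left e2
  have e2r := congrArg CommaMorphism.right e2
  have wil := Arrow.w il
  have wir := Arrow.w ir
  have wrl := Arrow.w rl
  have wrr := Arrow.w rr
  have wf := Arrow.w f
  dsimp at eil eir erl err e1l e1r e2l e2r wil wir wrl wrr wf
  refine ⟨⟨wf.symm⟩, ⟨PushoutCocone.IsColimit.mk _
    (fun s => ir.right ≫ hg.desc (rl.right ≫ s.inl) (rr.left ≫ s.inr) ?_) ?_ ?_ ?_⟩⟩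
  · rw [← reassoc_of% wrl, s.condition, reassoc_of% erl]
  · intro s
    rw [← reassoc_of% eir, hg.inl_desc, reassoc_of% e1r]
  · intro s
    rw [← reassoc_of% wir, hg.inr_desc, reassoc_of% e2l]
  · intro s m h1 h2
    have : rr.right ≫ m = hg.desc (rl.right ≫ s.inl) (rr.left ≫ s.inr)
        (by rw [← reassoc_of% wrl, s.condition, reassoc_of% erl]) := by
      apply hg.hom_ext
      · rw [hg.inl_desc, ← reassoc_of% err, h1]
      · rw [hg.inr_desc, ← reassoc_of% wrr, h2]
    rw [← this, reassoc_of% e2r]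

lemma arrowEasy_lift {M : Type u} [Category.{v} M]
    {A B X Y : Arrow M} (i : A ⟶ B) (p : X ⟶ Y)
    (hi : IsPushout A.hom i.left i.right B.hom)
    (h : HasLiftingProperty i.left p.left) : HasLiftingProperty i p := by
  refine ⟨fun {f g} sq => ?_⟩
  have e := sq.w
  have el : f.left ≫ p.left = i.left ≫ g.left := congrArg CommaMorphism.left e
  have er : f.right ≫ p.right = i.right ≫ g.right := congrArg CommaMorphism.right e
  have sq0 : CommSq f.left i.left p.left g.left := ⟨el⟩
  have wf := Arrow.w f
  have wg := Arrow.w g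
  have wp := Arrow.w p
  have c : A.hom ≫ f.right = i.left ≫ sq0.lift ≫ X.hom := by
    rw [sq0.fac_left_assoc, wf]
  refine ⟨⟨⟨Arrow.homMk sq0.lift (hi.desc f.right (sq0.lift ≫ X.hom) c)
    (hi.inr_desc _ _ _).symm, ?_, ?_⟩⟩⟩
  · ext
    · exact sq0.fac_left
    · exact hi.inl_desc _ _ _
  · ext
    · exact sq0.fac_right
    · change hi.desc f.right (sq0.lift ≫ X.hom) c ≫ p.right = g.right
      apply hi.hom_ext
      · rw [hi.inl_desc_assoc, er]
      · rw [hi.inr_desc_assoc, Category.assoc, ← wp, sq0.fac_right_assoc, wg]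

lemma arrowEasy_fac {M : Type u} [Category.{v} M] [HasPushouts M]
    (P Q : MorphismProperty M) [P.HasFactorization Q]
    {X Y : Arrow M} (f : X ⟶ Y) :
    ∃ (Z : Arrow M) (i : X ⟶ Z) (p : Z ⟶ Y), i ≫ p = f ∧ P i.left ∧ Q p.left ∧
      IsPushout X.hom i.left i.right Z.hom := by
  let d := MorphismProperty.factorizationData P Q f.left
  have c : X.hom ≫ f.right = d.i ≫ d.p ≫ Y.hom := by
    rw [d.fac_assoc]; exact (Arrow.w f).symm
  refine ⟨Arrow.mk (pushout.inr X.hom d.i),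
    Arrow.homMk d.i (pushout.inl X.hom d.i) pushout.condition.symm,
    Arrow.homMk d.p (pushout.desc f.right (d.p ≫ Y.hom) c) (pushout.inr_desc _ _ _).symm,
    ?_, d.hi, d.hp, IsPushout.of_hasPushout _ _⟩
  ext
  · exact d.fac
  · exact pushout.inl_desc _ _ _

theorem easy_model_structure_on_arrow_category
    {M : Type u} [Category.{v} M] [HasLimits M]
    (hpres : CoSegal.IsLocallyPresentable M)
    (W Cof Fib : MorphismProperty M)
    (hmodel : CoSegal.IsModelStructure W Cof Fib)
    {ιI ιJ : Type v} (I : ιI → Arrow M) (J' : ιJ → Arrow M)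
    (hFib : Fib = CoSegal.rlpAgainstFamily J')
    (hTrivFib : Fib ⊓ W = CoSegal.rlpAgainstFamily I) :
    ∃ Cof' : MorphismProperty (Arrow M),
      CoSegal.IsModelStructure
        (fun (F G : Arrow M) (σ : F ⟶ G) => W σ.left) Cof'
        (fun (F G : Arrow M) (σ : F ⟶ G) => Fib σ.left) := by
  have := hpres.1
  have := hmodel.two_out_of_three
  have := hmodel.fac_cof_trivFib
  have := hmodel.fac_trivCof_fib
  refine ⟨fun A B i => Cof i.left ∧ IsPushout A.hom i.left i.right B.hom, ?_⟩
  refine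
    { two_out_of_three :=
        inferInstanceAs (W.inverseImage (Arrow.leftFunc (C := M))).HasTwoOutOfThreeProperty
      weq_retract := fun _ _ _ _ f g h hg =>
        hmodel.weq_retract _ _ (arrowEasy_retract_left f g h) hg
      cof_retract := fun _ _ _ _ f g h hg =>
        ⟨hmodel.cof_retract _ _ (arrowEasy_retract_left f g h) hg.1,
          arrowEasy_retract_pushout f g h hg.2⟩
      fib_retract := fun _ _ _ _ f g h hg =>
        hmodel.fib_retract _ _ (arrowEasy_retract_left f g h) hg
      lift_cof_trivFib := fun _ _ _ _ i p hi hp hw =>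
        arrowEasy_lift i p hi.2 (hmodel.lift_cof_trivFib _ _ hi.1 hp hw)
      lift_trivCof_fib := fun _ _ _ _ i p hi hw hp =>
        arrowEasy_lift i p hi.2 (hmodel.lift_trivCof_fib _ _ hi.1 hw hp)
      fac_cof_trivFib := ⟨fun f => ?_⟩
      fac_trivCof_fib := ⟨fun f => ?_⟩ }
  · obtain ⟨Z, i, p, fac, hi, hp, hpo⟩ := arrowEasy_fac Cof (Fib ⊓ W) f
    exact ⟨⟨Z, i, p, fac, ⟨hi, hpo⟩, hp⟩⟩
  · obtain ⟨Z, i, p, fac, hi, hp, hpo⟩ := arrowEasy_fac (Cof ⊓ W) Fib f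
    exact ⟨⟨Z, i, p, fac, ⟨⟨hi.1, hpo⟩, hi.2⟩, hp⟩⟩
end
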